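/- arXiv:2204.09416 — 3 statements merged into one kernel-verified Lean document; each statement's English description precedes it below -/
import Mathlib

section
/- Let a_1,...,a_m be i.i.d. N(0, I_n) vectors and A = (1/m) Σ_j a_j a_j^T. For any 0 < ε ≤ 1, if m ≥ C ε⁻² n then P(‖A − I‖_op > ε) ≤ exp(−c m ε²), for universal constants C, c > 0. -/
open MeasureTheory ProbabilityTheory

noncomputable def stdGaussianMat (m n : ℕ) : Measure (Fin m → Fin n → ℝ) :=
  Measure.pi fun _ => Measure.pi fun _ => gaussianReal 0 1

open scoped RealInnerProductSpace

section SphereNet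

variable {E : Type*} [NormedAddCommGroup E] [InnerProductSpace ℝ E]

/-- The unit sphere of a finite-dimensional Euclidean space has a `1 / 2`-net with at most
`5 ^ dim` elements. -/
lemma exists_finset_net_sphere [FiniteDimensional ℝ E] :
    ∃ N : Finset E, N.card ≤ 5 ^ Module.finrank ℝ E ∧ (∀ y ∈ N, ‖y‖ = 1) ∧
      ∀ x : E, ‖x‖ = 1 → ∃ y ∈ N, ‖x - y‖ ≤ 1 / 2 := by
  classical
  have card_le (s : Finset E) (hs : ∀ y ∈ s, ‖y‖ = 1)
      (hsep : ∀ x ∈ s, ∀ y ∈ s, x ≠ y → 1 / 2 ≤ ‖x - y‖) :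
      s.card ≤ 5 ^ Module.finrank ℝ E := by
    rw [← Finset.card_image_of_injective s
      (smul_right_injective E (two_ne_zero : (2 : ℝ) ≠ 0))]
    refine Besicovitch.card_le_of_separated _ ?_ ?_
    · simp +contextual [norm_smul, hs]
    · simp only [Finset.mem_image]
      rintro _ ⟨x, hx, rfl⟩ _ ⟨y, hy, rfl⟩ hxy
      have := hsep x hx y hy (fun h ↦ hxy (by rw [h]))
      rw [← smul_sub, norm_smul, Real.norm_ofNat]
      linarith
  by_contra! hN
  have exists_card (k : ℕ) : ∃ s : Finset E, s.card = k ∧ (∀ y ∈ s, ‖y‖ = 1) ∧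
      ∀ x ∈ s, ∀ y ∈ s, x ≠ y → 1 / 2 ≤ ‖x - y‖ := by
    induction k with
    | zero => exact ⟨∅, by simp⟩
    | succ k ih =>
      obtain ⟨s, rfl, hs, hsep⟩ := ih
      obtain ⟨x, hx, hxs⟩ := hN s (card_le s hs hsep) hs
      have hxs' : x ∉ s := fun h ↦ by have := hxs x h; norm_num at this
      refine ⟨insert x s, Finset.card_insert_of_notMem hxs', ?_, ?_⟩
      · simpa [hx] using hs
      · intro a ha b hb hab
        rcases Finset.mem_insert.1 ha with rfl | has <;> rcases Finset.mem_insert.1 hb with rfl | hbs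
        · exact absurd rfl hab
        · exact (hxs b hbs).le
        · rw [norm_sub_rev]; exact (hxs a has).le
        · exact hsep a has b hbs hab
  obtain ⟨s, hcard, hs, hsep⟩ := exists_card (5 ^ Module.finrank ℝ E + 1)
  have := card_le s hs hsep
  omega

lemma norm_sub_mul_norm_add_le {x y : E} (hx : ‖x‖ = 1) (hy : ‖y‖ = 1) (hxy : ‖x - y‖ ≤ 1 / 2) :
    ‖x - y‖ * ‖x + y‖ ≤ 97 / 100 := by
  have h := parallelogram_law_with_norm ℝ x y
  rw [hx, hy] at h
  refine abs_le_of_sq_le_sq' ?_ (by norm_num) |>.2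
  have h₁ : ‖x - y‖ ^ 2 ≤ 1 / 4 := by nlinarith [norm_nonneg (x - y)]
  have h₂ : ‖x + y‖ ^ 2 = 4 - ‖x - y‖ ^ 2 := by linarith
  rw [mul_pow, h₂]
  nlinarith [sq_nonneg ‖x - y‖]

/-- The norm of a symmetric operator is controlled by its quadratic form on a `1 / 2`-net of the
unit sphere. -/
lemma exists_lt_abs_inner_of_lt_norm {T : E →L[ℝ] E} (hT : (T : E →ₗ[ℝ] E).IsSymmetric)
    {N : Finset E} (hN : ∀ y ∈ N, ‖y‖ = 1) (hnet : ∀ x : E, ‖x‖ = 1 → ∃ y ∈ N, ‖x - y‖ ≤ 1 / 2)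
    {ε : ℝ} (hε : 0 < ε) (hεT : ε < ‖T‖) :
    ∃ y ∈ N, ε / 64 < |⟪T y, y⟫| := by
  by_contra! h
  have bound (x : E) (hx : ‖x‖ = 1) : |⟪T x, x⟫| ≤ ε / 64 + 97 / 100 * ‖T‖ := by
    obtain ⟨y, hyN, hxy⟩ := hnet x hx
    have hsymm : ⟪T x, y⟫ = ⟪T y, x⟫ := (hT x y).trans (real_inner_comm _ _)
    have hdiff : ⟪T x, x⟫ = ⟪T y, y⟫ + ⟪T (x - y), x + y⟫ := by
      rw [map_sub, inner_sub_left, inner_add_right, inner_add_right, hsymm]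
      ring
    calc |⟪T x, x⟫| ≤ |⟪T y, y⟫| + |⟪T (x - y), x + y⟫| := hdiff ▸ abs_add_le _ _
      _ ≤ ε / 64 + ‖T‖ * ‖x - y‖ * ‖x + y‖ := by
        gcongr
        · exact h y hyN
        · exact (abs_real_inner_le_norm _ _).trans (by gcongr; exact T.le_opNorm _)
      _ ≤ _ := by
        nlinarith [norm_sub_mul_norm_add_le hx (hN y hyN) hxy, norm_nonneg T]
  have hle : ‖T‖ ≤ ε / 64 + 97 / 100 * ‖T‖ := by
    conv_lhs => rw [T.norm_eq_iSup_rayleighQuotient hT]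
    refine ciSup_le fun x ↦ ?_
    by_cases hx : x = 0
    · simp only [hx, ContinuousLinearMap.rayleighQuotient_apply_zero, abs_zero]
      positivity
    · have hx' : ‖x‖ ≠ 0 := norm_ne_zero_iff.2 hx
      have hunit : ‖(‖x‖⁻¹ : ℝ) • x‖ = 1 := by simp [norm_smul, hx']
      rw [← T.rayleigh_smul x (inv_ne_zero hx'), ContinuousLinearMap.rayleighQuotient,
        ContinuousLinearMap.reApplyInnerSelf_apply, hunit]
      simpa using bound _ hunit
  linarith

end SphereNet

section ChiSquare

lemma inv_sqrt_one_sub_le_exp {u : ℝ} (hu : |u| ≤ 1 / 2) :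
    (√(1 - u))⁻¹ ≤ Real.exp (u / 2 + u ^ 2) := by
  have hu' := abs_le.1 hu
  have hpos : 0 < 1 - u := by linarith
  have h := Real.abs_log_sub_add_sum_range_le (by linarith : |u| < 1) 1
  have hb : |u| ^ 2 / (1 - |u|) ≤ 2 * u ^ 2 := by
    rw [sq_abs, div_le_iff₀ (by linarith)]
    nlinarith [sq_nonneg u]
  have hlog := (abs_le.1 (h.trans hb)).1
  norm_num at hlog
  rw [Real.sqrt_eq_rpow, ← Real.rpow_neg hpos.le, Real.rpow_def_of_pos hpos]
  gcongr
  linarith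

lemma integral_exp_mul_sq_gaussianReal {l : ℝ} (hl : l < 1 / 2) :
    ∫ x, Real.exp (l * x ^ 2) ∂gaussianReal 0 1 = (√(1 - 2 * l))⁻¹ := by
  rw [integral_gaussianReal_eq_integral_smul one_ne_zero]
  have hpos : 0 < 1 - 2 * l := by linarith
  have hfun (x : ℝ) : gaussianPDFReal 0 1 x • Real.exp (l * x ^ 2) =
      (√(2 * Real.pi))⁻¹ * Real.exp (-((1 - 2 * l) / 2) * x ^ 2) := by
    simp only [gaussianPDFReal, NNReal.coe_one, mul_one, sub_zero, smul_eq_mul, mul_assoc,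
      ← Real.exp_add]
    ring_nf
  simp_rw [hfun]
  rw [integral_const_mul, integral_gaussian, ← Real.sqrt_inv, ← Real.sqrt_inv,
    ← Real.sqrt_mul (by positivity)]
  congr 1
  field_simp

lemma map_inner_pi_gaussianReal {n : ℕ} {y : EuclideanSpace ℝ (Fin n)} (hy : ‖y‖ = 1) :
    (Measure.pi fun _ : Fin n ↦ gaussianReal 0 1).map (fun x ↦ ∑ k, y k * x k) =
      gaussianReal 0 1 := by
  have hcomp : (fun x : Fin n → ℝ ↦ ∑ k, y k * x k) = innerSL ℝ y ∘ WithLp.toLp 2 := by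
    ext x
    simp [PiLp.inner_apply, mul_comm]
  rw [hcomp, ← Measure.map_map (by fun_prop) (by fun_prop), map_pi_eq_stdGaussian,
    IsGaussian.map_eq_gaussianReal, integral_strongDual_stdGaussian, variance_dual_stdGaussian,
    innerSL_apply_norm, hy]
  simp

variable {m n : ℕ}

lemma mgf_sum_sq_sub_one {y : EuclideanSpace ℝ (Fin n)} (hy : ‖y‖ = 1) {l : ℝ} (hl : l < 1 / 2) :
    mgf (fun a : Fin m → Fin n → ℝ ↦ ∑ j, ((∑ k, y k * a j k) ^ 2 - 1)) (stdGaussianMat m n) l =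
      (Real.exp (-l) * (√(1 - 2 * l))⁻¹) ^ m := by
  have hone : ∫ x : Fin n → ℝ, Real.exp (l * ((∑ k, y k * x k) ^ 2 - 1))
      ∂(Measure.pi fun _ ↦ gaussianReal 0 1) = Real.exp (-l) * (√(1 - 2 * l))⁻¹ := by
    have hmeas : Measurable fun x : Fin n → ℝ ↦ ∑ k, y k * x k := by fun_prop
    have hmap := integral_map (μ := Measure.pi fun _ : Fin n ↦ gaussianReal 0 1)
      hmeas.aemeasurable (f := fun z ↦ Real.exp (l * z ^ 2)) (by fun_prop)
    rw [map_inner_pi_gaussianReal hy, integral_exp_mul_sq_gaussianReal hl] at hmap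
    rw [hmap, ← integral_const_mul]
    refine integral_congr_ae (.of_forall fun x ↦ ?_)
    simp only [← Real.exp_add]
    ring_nf
  rw [mgf, ← hone]
  simp_rw [Finset.mul_sum, Real.exp_sum]
  rw [stdGaussianMat, integral_fintype_prod_eq_pow
    (fun x : Fin n → ℝ ↦ Real.exp (l * ((∑ k, y k * x k) ^ 2 - 1))), Fintype.card_fin]

instance : IsProbabilityMeasure (stdGaussianMat m n) := by
  unfold stdGaussianMat
  infer_instance

lemma mgf_sum_sq_sub_one_le {y : EuclideanSpace ℝ (Fin n)} (hy : ‖y‖ = 1) {l : ℝ}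
    (hl : |l| ≤ 1 / 4) :
    mgf (fun a : Fin m → Fin n → ℝ ↦ ∑ j, ((∑ k, y k * a j k) ^ 2 - 1)) (stdGaussianMat m n) l ≤
      Real.exp (4 * m * l ^ 2) := by
  rw [mgf_sum_sq_sub_one hy (by linarith [le_abs_self l])]
  calc (Real.exp (-l) * (√(1 - 2 * l))⁻¹) ^ m
      ≤ (Real.exp (-l) * Real.exp (2 * l / 2 + (2 * l) ^ 2)) ^ m := by
        gcongr
        exact inv_sqrt_one_sub_le_exp (by rw [abs_mul, abs_two]; linarith)
    _ = Real.exp (4 * m * l ^ 2) := by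
        rw [← Real.exp_add, ← Real.exp_nat_mul]
        ring_nf

lemma integrable_exp_sum_sq_sub_one {y : EuclideanSpace ℝ (Fin n)} (hy : ‖y‖ = 1) {l : ℝ}
    (hl : l < 1 / 2) :
    Integrable (fun a : Fin m → Fin n → ℝ ↦
      Real.exp (l * ∑ j, ((∑ k, y k * a j k) ^ 2 - 1))) (stdGaussianMat m n) := by
  refine .of_integral_ne_zero ?_
  rw [← mgf, mgf_sum_sq_sub_one hy hl]
  have : 0 < 1 - 2 * l := by linarith
  positivity

/-- Two-sided tail bound for a normalized chi-square variable with `m` degrees of freedom. -/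
lemma measureReal_lt_abs_le {y : EuclideanSpace ℝ (Fin n)} (hy : ‖y‖ = 1) {t : ℝ} (ht : 0 ≤ t)
    (ht1 : t ≤ 1) :
    (stdGaussianMat m n).real {a | m * t < |∑ j, ((∑ k, y k * a j k) ^ 2 - 1)|} ≤
      2 * Real.exp (-(m * t ^ 2 / 16)) := by
  set X : (Fin m → Fin n → ℝ) → ℝ := fun a ↦ ∑ j, ((∑ k, y k * a j k) ^ 2 - 1)
  have hl : |t / 8| ≤ 1 / 4 := by rw [abs_of_nonneg (by positivity)]; linarith
  have hl' : |-(t / 8)| ≤ 1 / 4 := by rwa [abs_neg]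
  have upper := measure_ge_le_exp_mul_mgf (X := X) (m * t) (by positivity : 0 ≤ t / 8)
    (integrable_exp_sum_sq_sub_one (m := m) hy (by linarith))
  have lower := measure_le_le_exp_mul_mgf (X := X) (-(m * t)) (by linarith : -(t / 8) ≤ 0)
    (integrable_exp_sum_sq_sub_one (m := m) hy (by linarith))
  have hexp : Real.exp (-(m * t ^ 2 / 16)) =
      Real.exp (-(t / 8) * (m * t)) * Real.exp (4 * m * (t / 8) ^ 2) := by
    rw [← Real.exp_add]
    ring_nf
  calc (stdGaussianMat m n).real {a | m * t < |X a|}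
      ≤ (stdGaussianMat m n).real ({a | m * t ≤ X a} ∪ {a | X a ≤ -(m * t)}) := by
        refine measureReal_mono fun a (ha : m * t < |X a|) ↦ ?_
        rcases lt_abs.1 ha with h | h
        · exact .inl h.le
        · exact .inr (by simp only [Set.mem_ofPred_eq]; linarith)
    _ ≤ _ := measureReal_union_le _ _
    _ ≤ Real.exp (-(m * t ^ 2 / 16)) + Real.exp (-(m * t ^ 2 / 16)) := by
        gcongr
        · refine upper.trans ?_
          rw [hexp]
          gcongr
          exact mgf_sum_sq_sub_one_le hy hl
        · refine lower.trans ?_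
          rw [hexp, neg_neg, mul_neg, ← neg_mul]
          gcongr
          exact (mgf_sum_sq_sub_one_le hy hl').trans_eq (by rw [neg_sq])
    _ = _ := by ring

end ChiSquare

section SampleCovariance

variable {m n : ℕ}

/-- The deviation `A - I` of the sample covariance matrix from the identity, as an operator. -/
noncomputable abbrev covarianceDeviation (a : Fin m → Fin n → ℝ) :
    EuclideanSpace ℝ (Fin n) →L[ℝ] EuclideanSpace ℝ (Fin n) :=
  LinearMap.toContinuousLinearMap (Matrix.toEuclideanLin
    ((Matrix.of fun k l : Fin n => (1 / (m : ℝ)) * ∑ j, a j k * a j l) - 1))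

lemma covarianceDeviation_isSymmetric (a : Fin m → Fin n → ℝ) :
    (covarianceDeviation a : EuclideanSpace ℝ (Fin n) →ₗ[ℝ] _).IsSymmetric := by
  rw [covarianceDeviation, LinearMap.coe_toContinuousLinearMap,
    Matrix.isSymmetric_toEuclideanLin_iff]
  refine Matrix.IsHermitian.sub ?_ Matrix.isHermitian_one
  ext k l
  simp [mul_comm]

lemma mul_inner_covarianceDeviation (hm : m ≠ 0) (a : Fin m → Fin n → ℝ)
    {y : EuclideanSpace ℝ (Fin n)} (hy : ‖y‖ = 1) :
    m * ⟪covarianceDeviation a y, y⟫ = ∑ j, ((∑ k, y k * a j k) ^ 2 - 1) := by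
  have hm' : (m : ℝ) ≠ 0 := Nat.cast_ne_zero.2 hm
  have hyy : ∑ k, y k * y k = 1 := by
    have := EuclideanSpace.real_norm_sq_eq y
    rw [hy] at this
    simpa [sq] using this.symm
  have hquad : ∑ k, (∑ l, (∑ j, a j k * a j l) * y l) * y k = ∑ j, (∑ k, y k * a j k) ^ 2 := by
    simp_rw [sq, Finset.sum_mul_sum, Finset.sum_mul]
    rw [Finset.sum_comm (s := (Finset.univ : Finset (Fin m)))]
    refine Finset.sum_congr rfl fun k _ ↦ ?_
    rw [Finset.sum_comm]
    exact Finset.sum_congr rfl fun j _ ↦ Finset.sum_congr rfl fun l _ ↦ by ring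
  have hinner : ⟪covarianceDeviation a y, y⟫ =
      1 / m * ∑ k, (∑ l, (∑ j, a j k * a j l) * y l) * y k - ∑ k, y k * y k := by
    simp only [covarianceDeviation, LinearMap.coe_toContinuousLinearMap', PiLp.inner_apply,
      Matrix.ofLp_toLpLin, Matrix.toLin'_apply, Matrix.sub_mulVec, Matrix.one_mulVec,
      Pi.sub_apply, RCLike.inner_apply, conj_trivial, mul_sub, Finset.sum_sub_distrib]
    simp only [Matrix.mulVec, dotProduct, Matrix.of_apply, Finset.mul_sum, Finset.sum_mul]
    congr! 4
    ring
  rw [hinner, hyy, hquad, Finset.sum_sub_distrib]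
  simp only [Finset.sum_const, Finset.card_univ, Fintype.card_fin, nsmul_eq_mul, mul_one]
  field_simp

end SampleCovariance

/-- For i.i.d. standard Gaussian vectors `aⱼ` and `A = (1/m) ∑ⱼ aⱼaⱼᵀ`:
if `0 < ε ≤ 1` and `m ≥ C ε⁻² n` then `P(‖A − I‖_op > ε) ≤ exp(−c m ε²)`. -/
theorem covariance_concentration :
    ∃ C > (0 : ℝ), ∃ c > (0 : ℝ), ∀ (n m : ℕ) (ε : ℝ), 0 < ε → ε ≤ 1 →
      (m : ℝ) ≥ C * ε⁻¹ ^ 2 * n →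
      (stdGaussianMat m n {a | ε <
          ‖LinearMap.toContinuousLinearMap (Matrix.toEuclideanLin
            ((Matrix.of fun k l : Fin n => (1 / (m : ℝ)) * ∑ j, a j k * a j l) - 1))‖}).toReal
        ≤ Real.exp (-(c * m * ε ^ 2)) := by
  refine ⟨96 * 64 ^ 2, by norm_num, 1 / (32 * 64 ^ 2), by norm_num, fun n m ε hε hε1 hmn ↦ ?_⟩
  change (stdGaussianMat m n).real {a | ε < ‖covarianceDeviation a‖} ≤ _
  rcases Nat.eq_zero_or_pos n with rfl | hn
  · have hempty : {a : Fin m → Fin 0 → ℝ | ε < ‖covarianceDeviation a‖} = ∅ := by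
      ext a
      simp [hε.le]
    rw [hempty, measureReal_empty]
    positivity
  have hm : m ≠ 0 := by
    rintro rfl
    have : 0 < 96 * 64 ^ 2 * ε⁻¹ ^ 2 * (n : ℝ) := by positivity
    norm_num at hmn this
    linarith
  have hm_pos : (0 : ℝ) < m := by positivity
  have hnm : 96 * 64 ^ 2 * (n : ℝ) ≤ m * ε ^ 2 := by
    calc 96 * 64 ^ 2 * (n : ℝ) = 96 * 64 ^ 2 * ε⁻¹ ^ 2 * n * ε ^ 2 := by field_simp
      _ ≤ m * ε ^ 2 := by gcongr
  obtain ⟨N, hcard, hN, hnet⟩ := exists_finset_net_sphere (E := EuclideanSpace ℝ (Fin n))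
  rw [finrank_euclideanSpace_fin] at hcard
  have hcount : (N.card : ℝ) * 2 ≤ Real.exp (3 * n) := by
    have hten : (10 : ℝ) ≤ Real.exp 3 := by
      have h2 : (2.7 : ℝ) ^ 3 ≤ Real.exp 1 ^ 3 := by
        gcongr
        linarith [Real.exp_one_gt_d9]
      rw [← Real.exp_nat_mul] at h2
      norm_num at h2
      linarith
    have htwo : (2 : ℝ) ≤ 2 ^ n := le_self_pow₀ one_le_two hn.ne'
    calc (N.card : ℝ) * 2 ≤ 5 ^ n * 2 ^ n := by gcongr; exact_mod_cast hcard
      _ = 10 ^ n := by rw [← mul_pow]; norm_num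
      _ ≤ Real.exp 3 ^ n := by gcongr
      _ = Real.exp (3 * n) := by rw [← Real.exp_nat_mul, mul_comm]
  have hsubset : {a : Fin m → Fin n → ℝ | ε < ‖covarianceDeviation a‖} ⊆
      ⋃ y ∈ N, {a | m * (ε / 64) < |∑ j, ((∑ k, y k * a j k) ^ 2 - 1)|} := by
    intro a ha
    obtain ⟨y, hyN, hy⟩ :=
      exists_lt_abs_inner_of_lt_norm (covarianceDeviation_isSymmetric a) hN hnet hε ha
    refine Set.mem_biUnion hyN ?_
    rw [Set.mem_ofPred_eq, ← mul_inner_covarianceDeviation hm a (hN y hyN), abs_mul,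
      abs_of_pos hm_pos]
    gcongr
  calc (stdGaussianMat m n).real {a | ε < ‖covarianceDeviation a‖}
      ≤ ∑ y ∈ N, (stdGaussianMat m n).real
          {a | m * (ε / 64) < |∑ j, ((∑ k, y k * a j k) ^ 2 - 1)|} :=
        (measureReal_mono hsubset (measure_ne_top _ _)).trans (measureReal_biUnion_finset_le _ _)
    _ ≤ ∑ y ∈ N, 2 * Real.exp (-(m * (ε / 64) ^ 2 / 16)) :=
        Finset.sum_le_sum fun y hy ↦
          measureReal_lt_abs_le (hN y hy) (by positivity) (by linarith)
    _ = N.card * 2 * Real.exp (-(m * (ε / 64) ^ 2 / 16)) := by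
        rw [Finset.sum_const, nsmul_eq_mul, mul_assoc]
    _ ≤ Real.exp (3 * n) * Real.exp (-(m * (ε / 64) ^ 2 / 16)) := by gcongr
    _ ≤ Real.exp (-(1 / (32 * 64 ^ 2) * m * ε ^ 2)) := by
        rw [← Real.exp_add]
        gcongr
        linarith
end

section
/- For 0 < ε ≤ 1/2 there exists N₀(ε) = C√(log(1/ε)) such that for N ≥ N₀ and m ≥ C ε⁻² log(1/ε) n, with probability at least 1 − exp(−c ε² m), (1/m) Σ_{j=1}^m 1{|a_j^T u| > N} ≤ ε for every unit vector u ∈ R^n. -/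
open MeasureTheory ProbabilityTheory
open scoped Classical

instance isProbabilityMeasure_stdGaussianMat (m n : ℕ) :
    IsProbabilityMeasure (stdGaussianMat m n) := by
  unfold stdGaussianMat
  infer_instance

/-- A version of Tonelli's theorem for products of functions of independent coordinates. -/
theorem lintegral_pi_prod_eq_prod {ι : Type*} [Fintype ι] {E : ι → Type*}
    [∀ i, MeasurableSpace (E i)] {μ : ∀ i, Measure (E i)} [∀ i, IsProbabilityMeasure (μ i)]
    {f : ∀ i, E i → ENNReal} (hf : ∀ i, Measurable (f i)) :
    ∫⁻ x, ∏ i, f i (x i) ∂(Measure.pi μ) = ∏ i, ∫⁻ x, f i x ∂(μ i) := by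
  have h := lintegral_prod_eq_prod_lintegral_of_indepFun Finset.univ
    (fun i (x : ∀ i, E i) => f i (x i))
    (iIndepFun_pi (μ := μ) fun i => (hf i).aemeasurable)
    fun i => (hf i).comp (measurable_pi_apply i)
  rw [h]
  exact Finset.prod_congr rfl fun i _ =>
    (measurePreserving_eval μ i).lintegral_comp (hf i)

theorem lintegral_exp_mul_gaussianReal (t : ℝ) :
    ∫⁻ x, ENNReal.ofReal (Real.exp (t * x)) ∂(gaussianReal 0 1) =
      ENNReal.ofReal (Real.exp (t ^ 2 / 2)) := by
  rw [← ofReal_integral_eq_lintegral_ofReal (integrable_exp_mul_gaussianReal t)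
    (.of_forall fun _ => (Real.exp_pos _).le)]
  have h := congrFun (mgf_fun_id_gaussianReal (μ := 0) (v := 1)) t
  simp only [mgf] at h
  rw [h]
  simp

theorem lintegral_exp_sq_div_four_gaussianReal :
    ∫⁻ x, ENNReal.ofReal (Real.exp (x ^ 2 / 4)) ∂(gaussianReal 0 1) =
      ENNReal.ofReal √2 := by
  rw [gaussianReal_of_var_ne_zero 0 one_ne_zero,
    lintegral_withDensity_eq_lintegral_mul _ (measurable_gaussianPDF 0 1) (by fun_prop)]
  have h (x : ℝ) : (gaussianPDF 0 1 * fun x => ENNReal.ofReal (Real.exp (x ^ 2 / 4))) x =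
      ENNReal.ofReal ((√(2 * Real.pi))⁻¹ * Real.exp (-(1 / 4) * x ^ 2)) := by
    simp only [Pi.mul_apply, gaussianPDF, gaussianPDFReal]
    rw [← ENNReal.ofReal_mul (by positivity), mul_assoc, ← Real.exp_add]
    congr 3
    · simp
    · simp; ring
  simp_rw [h]
  rw [← ofReal_integral_eq_lintegral_ofReal
      ((integrable_exp_neg_mul_sq (by norm_num)).const_mul _)
      (.of_forall fun _ => by positivity),
    integral_const_mul, integral_gaussian, ← Real.sqrt_inv, ← Real.sqrt_mul (by positivity)]
  congr 2
  field_simp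
  norm_num

/-- Exponential moment of the squared norm of a linear combination of Gaussian rows. -/
theorem lintegral_exp_norm_sq_stdGaussianMat {m n : ℕ} (s : Fin m → ℝ)
    (hs : 0 < ∑ j, s j ^ 2) :
    ∫⁻ a, ENNReal.ofReal
        (Real.exp ((∑ i, (∑ j, s j * a j i) ^ 2) / (4 * ∑ j, s j ^ 2))) ∂(stdGaussianMat m n) =
      ENNReal.ofReal (√2 ^ n) := by
  set k := ∑ j, s j ^ 2 with hk
  set t := √(1 / (2 * k)) with ht
  have ht2 : t ^ 2 = 1 / (2 * k) := Real.sq_sqrt (by positivity)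
  have linearize (a : Fin m → Fin n → ℝ) :
      ENNReal.ofReal (Real.exp ((∑ i, (∑ j, s j * a j i) ^ 2) / (4 * k))) =
        ∫⁻ g, ∏ i, ENNReal.ofReal (Real.exp ((t * ∑ j, s j * a j i) * g i))
          ∂(Measure.pi fun _ : Fin n => gaussianReal 0 1) := by
    rw [lintegral_pi_prod_eq_prod (f := fun i (x : ℝ) =>
      ENNReal.ofReal (Real.exp ((t * ∑ j, s j * a j i) * x))) fun i => by fun_prop]
    simp_rw [lintegral_exp_mul_gaussianReal]
    rw [← ENNReal.ofReal_prod_of_nonneg fun _ _ => (Real.exp_pos _).le, ← Real.exp_sum,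
      Finset.sum_div]
    congr 2
    refine Finset.sum_congr rfl fun i _ => ?_
    rw [mul_pow, ht2]
    field_simp
    norm_num
  have integrate (g : Fin n → ℝ) :
      ∫⁻ a, ∏ i, ENNReal.ofReal (Real.exp ((t * ∑ j, s j * a j i) * g i))
          ∂(stdGaussianMat m n) =
        ∏ i, ENNReal.ofReal (Real.exp (g i ^ 2 / 4)) := by
    have h (a : Fin m → Fin n → ℝ) :
        ∏ i, ENNReal.ofReal (Real.exp ((t * ∑ j, s j * a j i) * g i)) =
          ∏ j, ∏ i, ENNReal.ofReal (Real.exp ((t * s j * g i) * a j i)) := by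
      rw [Finset.prod_comm]
      refine Finset.prod_congr rfl fun i _ => ?_
      rw [← ENNReal.ofReal_prod_of_nonneg fun _ _ => (Real.exp_pos _).le, ← Real.exp_sum,
        Finset.mul_sum, Finset.sum_mul]
      congr 2
      exact Finset.sum_congr rfl fun j _ => by ring
    simp_rw [h]
    unfold stdGaussianMat
    rw [lintegral_pi_prod_eq_prod (f := fun j (b : Fin n → ℝ) =>
      ∏ i, ENNReal.ofReal (Real.exp ((t * s j * g i) * b i))) fun j => by fun_prop]
    have h' (j : Fin m) :
        ∫⁻ b, ∏ i, ENNReal.ofReal (Real.exp ((t * s j * g i) * b i))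
          ∂(Measure.pi fun _ : Fin n => gaussianReal 0 1) =
        ∏ i, ENNReal.ofReal (Real.exp ((t * s j * g i) ^ 2 / 2)) := by
      rw [lintegral_pi_prod_eq_prod (f := fun i (x : ℝ) =>
        ENNReal.ofReal (Real.exp ((t * s j * g i) * x))) fun i => by fun_prop]
      simp_rw [lintegral_exp_mul_gaussianReal]
    simp_rw [h']
    rw [Finset.prod_comm]
    refine Finset.prod_congr rfl fun i _ => ?_
    rw [← ENNReal.ofReal_prod_of_nonneg fun _ _ => (Real.exp_pos _).le, ← Real.exp_sum]
    congr 2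
    have h'' (j : Fin m) : (t * s j * g i) ^ 2 / 2 = s j ^ 2 * (t ^ 2 * g i ^ 2 / 2) := by ring
    simp_rw [h'']
    rw [← Finset.sum_mul, ← hk, ht2]
    field_simp
    ring
  simp_rw [linearize]
  rw [lintegral_lintegral_swap (by fun_prop)]
  simp_rw [integrate]
  rw [lintegral_pi_prod_eq_prod (f := fun _ (x : ℝ) =>
    ENNReal.ofReal (Real.exp (x ^ 2 / 4))) fun i => by fun_prop]
  simp [lintegral_exp_sq_div_four_gaussianReal, ENNReal.ofReal_pow]

theorem stdGaussianMat_norm_sq_gt_le {m n : ℕ} (s : Fin m → ℝ) (N : ℝ)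
    (hs : 0 < ∑ j, s j ^ 2) :
    stdGaussianMat m n {a | ((∑ j, s j ^ 2) * N) ^ 2 < ∑ i, (∑ j, s j * a j i) ^ 2} ≤
      ENNReal.ofReal (√2 ^ n * Real.exp (-((∑ j, s j ^ 2) * N ^ 2 / 4))) := by
  set k := ∑ j, s j ^ 2 with hk
  have hsub : {a : Fin m → Fin n → ℝ | (k * N) ^ 2 < ∑ i, (∑ j, s j * a j i) ^ 2} ⊆
      {a | ENNReal.ofReal (Real.exp (k * N ^ 2 / 4)) ≤
        ENNReal.ofReal (Real.exp ((∑ i, (∑ j, s j * a j i) ^ 2) / (4 * k)))} := by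
    intro a ha
    simp only [Set.mem_ofPred_eq] at ha ⊢
    refine ENNReal.ofReal_le_ofReal (Real.exp_le_exp.mpr ?_)
    rw [le_div_iff₀ (by positivity)]
    linarith
  refine (measure_mono hsub).trans ?_
  have hmeas : Measurable fun a : Fin m → Fin n → ℝ =>
      ENNReal.ofReal (Real.exp ((∑ i, (∑ j, s j * a j i) ^ 2) / (4 * k))) := by
    clear_value k
    fun_prop
  refine (meas_ge_le_lintegral_div hmeas.aemeasurable (by simp [Real.exp_pos])
    ENNReal.ofReal_ne_top).trans ?_
  rw [hk, lintegral_exp_norm_sq_stdGaussianMat s hs, ← hk,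
    ← ENNReal.ofReal_div_of_pos (Real.exp_pos _), Real.exp_neg, div_eq_mul_inv]

/-- If many rows have a large inner product with a unit vector, then some signed sum of rows has
a large norm. -/
theorem exists_sign_norm_sq_gt {m n : ℕ} (a : Fin m → Fin n → ℝ) (u : Fin n → ℝ)
    (hu : ∑ i, u i ^ 2 = 1) {N δ : ℝ} (hN : 0 < N) (hδ : 0 ≤ δ)
    (h : δ < ∑ j, (if N < |∑ i, a j i * u i| then (1 : ℝ) else 0)) :
    ∃ σ : Fin m → SignType, δ < ∑ j, (σ j : ℝ) ^ 2 ∧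
      ((∑ j, (σ j : ℝ) ^ 2) * N) ^ 2 < ∑ i, (∑ j, (σ j : ℝ) * a j i) ^ 2 := by
  let x : Fin m → ℝ := fun j => ∑ i, a j i * u i
  let σ : Fin m → SignType := fun j => if N < |x j| then SignType.sign (x j) else 0
  have hsq (j : Fin m) : (σ j : ℝ) ^ 2 = if N < |x j| then (1 : ℝ) else 0 := by
    by_cases hj : N < |x j|
    · have hx : x j ≠ 0 := abs_pos.mp (hN.trans hj)
      simp only [σ, hj, if_true]
      rcases hx.lt_or_gt with hx | hx <;> simp [hx]
    · simp [σ, hj]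
  have hcard : δ < ∑ j, (σ j : ℝ) ^ 2 := by simpa only [hsq] using h
  refine ⟨σ, hcard, ?_⟩
  have hterm (j : Fin m) : (σ j : ℝ) ^ 2 * N ≤ σ j * x j := by
    rw [hsq]
    by_cases hj : N < |x j|
    · simp [σ, hj, hj.le]
    · simp [σ, hj]
  have hsum : (∑ j, (σ j : ℝ) ^ 2) * N < ∑ j, (σ j : ℝ) * x j := by
    rw [Finset.sum_mul]
    refine Finset.sum_lt_sum (fun j _ => hterm j) ?_
    obtain ⟨j, -, hj⟩ := Finset.exists_ne_zero_of_sum_ne_zero (hδ.trans_lt hcard).ne'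
    have hj' : N < |x j| := by
      by_contra hc
      exact hj (by rw [hsq, if_neg hc])
    exact ⟨j, Finset.mem_univ j, by rw [hsq, if_pos hj']; simp [σ, hj']⟩
  have hswap : ∑ j, (σ j : ℝ) * x j = ∑ i, (∑ j, (σ j : ℝ) * a j i) * u i := by
    simp_rw [x, Finset.mul_sum, Finset.sum_mul]
    rw [Finset.sum_comm]
    exact Finset.sum_congr rfl fun _ _ => Finset.sum_congr rfl fun _ _ => by ring
  have hcs := Finset.sum_mul_sq_le_sq_mul_sq Finset.univ
    (fun i => ∑ j, (σ j : ℝ) * a j i) u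
  rw [hu, mul_one, ← hswap] at hcs
  have hpos : 0 ≤ (∑ j, (σ j : ℝ) ^ 2) * N := by positivity
  exact (pow_lt_pow_left₀ hsum hpos two_ne_zero).trans_le hcs

theorem sum_exp_neg_card_sign (m : ℕ) (L : ℝ) :
    ∑ σ : Fin m → SignType, Real.exp (-(L * ∑ j, (σ j : ℝ) ^ 2)) =
      (1 + 2 * Real.exp (-L)) ^ m := by
  have h : ∑ s : SignType, Real.exp (-(L * (s : ℝ) ^ 2)) = 1 + 2 * Real.exp (-L) := by
    have : (Finset.univ : Finset SignType) = {0, -1, 1} := rfl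
    rw [this, Finset.sum_insert (by decide), Finset.sum_pair (by decide)]
    simp
    ring
  rw [← h, Fintype.sum_pow]
  simp_rw [← Real.exp_sum, Finset.mul_sum, Finset.sum_neg_distrib]

/-- For `0 < ε ≤ 1/2`, `N ≥ C√(log(1/ε))` and `m ≥ C ε⁻² log(1/ε) n`, with
probability at least `1 − exp(−c ε² m)`, `(1/m)∑ⱼ 1{|aⱼᵀu| > N} ≤ ε` for all unit `u`. -/
theorem uniform_truncation_bound :
    ∃ C > (0 : ℝ), ∃ c > (0 : ℝ), ∀ ε : ℝ, 0 < ε → ε ≤ 1 / 2 →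
      ∀ N : ℝ, N ≥ C * Real.sqrt (Real.log (1 / ε)) → ∀ n m : ℕ,
      (m : ℝ) ≥ C * ε⁻¹ ^ 2 * Real.log (1 / ε) * n →
      stdGaussianMat m n {a | ∀ u : Fin n → ℝ, ∑ i, (u i) ^ 2 = 1 →
          (1 / (m : ℝ)) * ∑ j, (if N < |∑ i, a j i * u i| then (1 : ℝ) else 0) ≤ ε}
        ≥ ENNReal.ofReal (1 - Real.exp (-(c * ε ^ 2 * m))) := by
  refine ⟨10, by norm_num, 1, one_pos, fun ε hε hε2 N hN n m hm => ?_⟩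
  set L := Real.log (1 / ε) with hL
  have hL2 : 0.69 ≤ L := by
    have h2 : Real.log 2 ≤ L := Real.log_le_log two_pos (by
      rw [le_div_iff₀ hε]; linarith)
    linarith [Real.log_two_gt_d9]
  have hL0 : 0 < L := by linarith
  have hexpL : Real.exp (-L) = ε := by
    rw [hL, one_div, Real.log_inv, neg_neg, Real.exp_log hε]
  have hN0 : 0 < N := lt_of_lt_of_le (by positivity) hN
  have hN2 : 100 * L ≤ N ^ 2 := by
    have := pow_le_pow_left₀ (by positivity) hN 2
    rw [mul_pow, Real.sq_sqrt hL0.le] at this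
    linarith
  have hn : (n : ℝ) ≤ ε * m := by
    have h1 : 10 * L * n ≤ ε ^ 2 * m := by
      calc 10 * L * n = ε ^ 2 * (10 * ε⁻¹ ^ 2 * L * n) := by field_simp
        _ ≤ ε ^ 2 * m := by gcongr
    have h2 : ε ^ 2 * m ≤ ε * m := by gcongr; nlinarith
    have h3 : (1 : ℝ) * n ≤ 10 * L * n := by gcongr; linarith
    linarith
  set G := {a : Fin m → Fin n → ℝ | ∀ u : Fin n → ℝ, ∑ i, (u i) ^ 2 = 1 →
    (1 / (m : ℝ)) * ∑ j, (if N < |∑ i, a j i * u i| then (1 : ℝ) else 0) ≤ ε} with hG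
  let T := Finset.univ.filter fun σ : Fin m → SignType => ε * m < ∑ j, (σ j : ℝ) ^ 2
  have hsub : Gᶜ ⊆ ⋃ σ ∈ T, {a | ((∑ j, (σ j : ℝ) ^ 2) * N) ^ 2 <
      ∑ i, (∑ j, (σ j : ℝ) * a j i) ^ 2} := by
    intro a ha
    simp only [hG, Set.mem_compl_iff, Set.mem_ofPred_eq, not_forall, not_le] at ha
    obtain ⟨u, hu, ha⟩ := ha
    have hm0 : 0 < (m : ℝ) := by
      by_contra h
      have : (m : ℝ) = 0 := le_antisymm (not_lt.mp h) (Nat.cast_nonneg m)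
      rw [this, div_zero, zero_mul] at ha
      linarith
    rw [one_div_mul_eq_div, lt_div_iff₀ hm0] at ha
    obtain ⟨σ, h1, h2⟩ := exists_sign_norm_sq_gt a u hu hN0 (by positivity) ha
    simp only [Set.mem_iUnion]
    exact ⟨σ, by simpa [T] using h1, h2⟩
  have hbad : stdGaussianMat m n Gᶜ ≤ ENNReal.ofReal (Real.exp (-(1 * ε ^ 2 * m))) := by
    refine (measure_mono hsub).trans ((measure_biUnion_finset_le _ _).trans ?_)
    have hterm : ∀ σ ∈ T, stdGaussianMat m n {a | ((∑ j, (σ j : ℝ) ^ 2) * N) ^ 2 <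
        ∑ i, (∑ j, (σ j : ℝ) * a j i) ^ 2} ≤
        ENNReal.ofReal (√2 ^ n * Real.exp (-(ε * m * (24 * L))) *
          Real.exp (-(L * ∑ j, (σ j : ℝ) ^ 2))) := by
      intro σ hσ
      have hσ' : ε * m < ∑ j, (σ j : ℝ) ^ 2 := by simpa [T] using hσ
      refine (stdGaussianMat_norm_sq_gt_le _ N (lt_of_le_of_lt (by positivity) hσ')).trans ?_
      rw [mul_assoc, ← Real.exp_add]
      gcongr
      nlinarith [mul_le_mul_of_nonneg_left hN2
        ((by positivity : 0 ≤ ε * m).trans hσ'.le), mul_le_mul_of_nonneg_right hσ'.le hL0.le]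
    refine (Finset.sum_le_sum hterm).trans ?_
    rw [← ENNReal.ofReal_sum_of_nonneg fun _ _ => by positivity, ← Finset.mul_sum]
    refine ENNReal.ofReal_le_ofReal ?_
    have hsum : ∑ σ ∈ T, Real.exp (-(L * ∑ j, (σ j : ℝ) ^ 2)) ≤ Real.exp (2 * ε * m) := by
      refine (Finset.sum_le_sum_of_subset_of_nonneg (Finset.subset_univ T)
        fun _ _ _ => (Real.exp_pos _).le).trans ?_
      rw [sum_exp_neg_card_sign, hexpL, mul_comm (2 * ε), Real.exp_nat_mul]
      gcongr
      linarith [Real.add_one_le_exp (2 * ε)]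
    have hsqrt : √2 ^ n ≤ Real.exp n := by
      rw [← mul_one (n : ℝ), Real.exp_nat_mul]
      gcongr
      have : √2 ≤ 2 := by rw [Real.sqrt_le_left two_pos.le]; norm_num
      linarith [Real.add_one_le_exp 1]
    calc √2 ^ n * Real.exp (-(ε * m * (24 * L))) *
          ∑ σ ∈ T, Real.exp (-(L * ∑ j, (σ j : ℝ) ^ 2))
        ≤ Real.exp n * Real.exp (-(ε * m * (24 * L))) * Real.exp (2 * ε * m) := by gcongr
      _ = Real.exp (n + -(ε * m * (24 * L)) + 2 * ε * m) := by rw [Real.exp_add, Real.exp_add]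
      _ ≤ Real.exp (-(1 * ε ^ 2 * m)) := by
        gcongr
        have h0 : 0 ≤ ε * m := by positivity
        have h2 : ε ^ 2 * m ≤ ε * m := by gcongr; nlinarith
        nlinarith [mul_le_mul_of_nonneg_left hL2 h0]
  rw [ge_iff_le, ENNReal.ofReal_sub _ (Real.exp_pos _).le, ENNReal.ofReal_one,
    tsub_le_iff_right, ← measure_univ (μ := stdGaussianMat m n)]
  calc stdGaussianMat m n Set.univ = stdGaussianMat m n (G ∪ Gᶜ) := by rw [Set.union_compl_self]
    _ ≤ _ := (measure_union_le _ _).trans (by gcongr)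
end

section
/- If m ≥ C n, then with probability at least 1 − exp(−c m), (1/m) Σ_{j=1}^m (a_j^T u)^2 (a_j^T v)^2 ≥ c₁ > 0 for all unit vectors u, v ∈ R^n, where C, c, c₁ are absolute positive constants. -/
open MeasureTheory ProbabilityTheory

@[fun_prop]
lemma measurable_dotProduct {α ι : Type*} [MeasurableSpace α] [Fintype ι] {f g : α → ι → ℝ}
    (hf : Measurable f) (hg : Measurable g) : Measurable fun x => f x ⬝ᵥ g x := by
  simp only [dotProduct]
  fun_prop

/-- Exponential change of variables for a translated one-dimensional standard Gaussian. -/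
lemma lintegral_gaussianReal_add_mul_exp (c : ℝ) {F : ℝ → ENNReal} (hF : Measurable F) :
    ∫⁻ x, F (x + c) * ENNReal.ofReal (Real.exp (-(c * x) - c ^ 2 / 2)) ∂gaussianReal 0 1 =
      ∫⁻ x, F x ∂gaussianReal 0 1 := by
  rw [gaussianReal_of_var_ne_zero 0 one_ne_zero,
    lintegral_withDensity_eq_lintegral_mul _ (measurable_gaussianPDF 0 1) (by fun_prop),
    lintegral_withDensity_eq_lintegral_mul _ (measurable_gaussianPDF 0 1) hF,
    ← lintegral_add_right_eq_self
      (gaussianPDF 0 1 * F) c]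
  refine lintegral_congr fun x => ?_
  have h : gaussianPDF 0 1 (x + c) =
      gaussianPDF 0 1 x * ENNReal.ofReal (Real.exp (-(c * x) - c ^ 2 / 2)) := by
    simp only [gaussianPDF_def]
    rw [← ENNReal.ofReal_mul (gaussianPDFReal_nonneg _ _ _)]
    simp only [gaussianPDFReal_def]
    rw [mul_assoc (√_)⁻¹, ← Real.exp_add]
    congr 3
    push_cast
    ring
  simp only [Pi.mul_apply, h]
  ring

lemma lintegral_pi_prod {ι : Type*} [Fintype ι] {Ω : ι → Type*} [∀ i, MeasurableSpace (Ω i)]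
    (μ : ∀ i, Measure (Ω i)) [∀ i, IsProbabilityMeasure (μ i)] {f : ∀ i, Ω i → ENNReal}
    (hf : ∀ i, Measurable (f i)) :
    ∫⁻ x, ∏ i, f i (x i) ∂Measure.pi μ = ∏ i, ∫⁻ y, f i y ∂μ i := by
  have h := lintegral_prod_eq_prod_lintegral_of_indepFun Finset.univ
    (fun i (x : ∀ i, Ω i) => f i (x i))
    (iIndepFun_pi (μ := μ) fun i => (hf i).aemeasurable)
    (fun i => (hf i).comp (measurable_pi_apply i))
  refine h.trans ?_
  exact Finset.prod_congr rfl fun i _ => (measurePreserving_eval μ i).lintegral_comp (hf i)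

/-- Exponential change of variables for a translated standard Gaussian vector. -/
lemma lintegral_pi_gaussianReal_add_mul_exp {ι : Type*} [Fintype ι] (w : ι → ℝ)
    {F : (ι → ℝ) → ENNReal} (hF : Measurable F) :
    ∫⁻ z, F (z + w) * ENNReal.ofReal (Real.exp (-(w ⬝ᵥ z) - (w ⬝ᵥ w) / 2))
        ∂Measure.pi (fun _ => gaussianReal 0 1) =
      ∫⁻ z, F z ∂Measure.pi (fun _ => gaussianReal 0 1) := by
  set γ : Measure (ι → ℝ) := Measure.pi fun _ => gaussianReal 0 1
  set f : (ι → ℝ) → ENNReal := fun z =>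
    ENNReal.ofReal (Real.exp (-(w ⬝ᵥ z) - (w ⬝ᵥ w) / 2)) with hf_def
  have hf : Measurable f := by
    fun_prop
  have hshift : Measurable fun z : ι → ℝ => z + w := by fun_prop
  have key : γ = (γ.withDensity f).map (fun z => z + w) := by
    refine Measure.pi_eq fun s hs => ?_
    rw [Measure.map_apply hshift (.univ_pi hs),
      withDensity_apply _ (hshift (.univ_pi hs)),
      ← lintegral_indicator (hshift (.univ_pi hs))]
    have hind (z : ι → ℝ) :
        ((fun z => z + w) ⁻¹' Set.univ.pi s).indicator f z =
          ∏ i, (s i).indicator 1 (z i + w i) *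
            ENNReal.ofReal (Real.exp (-(w i * z i) - w i ^ 2 / 2)) := by
      have h1 : ∏ i, ENNReal.ofReal (Real.exp (-(w i * z i) - w i ^ 2 / 2)) = f z := by
        rw [← ENNReal.ofReal_prod_of_nonneg fun i _ => (Real.exp_pos _).le, ← Real.exp_sum]
        simp only [hf_def, dotProduct, Finset.sum_sub_distrib, Finset.sum_neg_distrib,
          ← Finset.sum_div, pow_two]
      rw [Finset.prod_mul_distrib, h1]
      by_cases h : ∀ i, z i + w i ∈ s i
      · rw [Set.indicator_of_mem (by simpa using h)]
        simp [h]
      · rw [Set.indicator_of_notMem (by simpa using h)]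
        obtain ⟨i, hi⟩ := not_forall.1 h
        rw [Finset.prod_eq_zero (Finset.mem_univ i) (by simp [hi]), zero_mul]
    simp_rw [hind]
    rw [lintegral_pi_prod (fun _ => gaussianReal 0 1)
      (f := fun i y => (s i).indicator 1 (y + w i) *
            ENNReal.ofReal (Real.exp (-(w i * y) - w i ^ 2 / 2)))]
    · refine Finset.prod_congr rfl fun i _ => ?_
      rw [lintegral_gaussianReal_add_mul_exp _ (measurable_one.indicator (hs i)),
        lintegral_indicator_one (hs i)]
    · intro i
      have := (measurable_one (α := ENNReal) (β := ℝ)).indicator (hs i)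
      fun_prop
  conv_rhs =>
    rw [key, lintegral_map hF hshift]
  rw [lintegral_withDensity_eq_lintegral_mul γ hf (g := fun z => F (z + w)) (hF.comp hshift)]
  exact lintegral_congr fun z => mul_comm _ _

/-- A linear form of a standard Gaussian vector is a centred Gaussian. -/
lemma map_dotProduct_pi_gaussianReal {ι : Type*} [Fintype ι] (w : ι → ℝ) :
    (Measure.pi fun _ : ι => gaussianReal 0 1).map (fun z => w ⬝ᵥ z) =
      gaussianReal 0 (w ⬝ᵥ w).toNNReal := by
  have h := IsGaussian.map_eq_gaussianReal (μ := stdGaussian (EuclideanSpace ℝ ι))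
    (innerSL ℝ (WithLp.toLp 2 w))
  rw [integral_strongDual_stdGaussian, variance_dual_stdGaussian, ← map_pi_eq_stdGaussian,
    Measure.map_map (by fun_prop) (by fun_prop)] at h
  convert h using 2
  · ext z
    simp [dotProduct_comm w, EuclideanSpace.inner_toLp_toLp]
  · simp [EuclideanSpace.norm_sq_eq, dotProduct, ← pow_two]

lemma integrable_dotProduct_sq_pi_gaussianReal {ι : Type*} [Fintype ι] (w : ι → ℝ) :
    Integrable (fun z => (w ⬝ᵥ z) ^ 2) (Measure.pi fun _ : ι => gaussianReal 0 1) := by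
  have h : MemLp id 2 ((Measure.pi fun _ : ι => gaussianReal 0 1).map (fun z => w ⬝ᵥ z)) := by
    rw [map_dotProduct_pi_gaussianReal]
    exact memLp_id_gaussianReal 2
  exact (h.comp_of_map (by fun_prop)).integrable_sq

lemma integrable_dotProduct_pi_gaussianReal {ι : Type*} [Fintype ι] (w : ι → ℝ) :
    Integrable (fun z => w ⬝ᵥ z) (Measure.pi fun _ : ι => gaussianReal 0 1) := by
  have h : MemLp id 1 ((Measure.pi fun _ : ι => gaussianReal 0 1).map (fun z => w ⬝ᵥ z)) := by
    rw [map_dotProduct_pi_gaussianReal]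
    exact memLp_id_gaussianReal 1
  exact memLp_one_iff_integrable.1 (h.comp_of_map (by fun_prop))

lemma integral_dotProduct_pi_gaussianReal {ι : Type*} [Fintype ι] (w : ι → ℝ) :
    ∫ z, w ⬝ᵥ z ∂(Measure.pi fun _ : ι => gaussianReal 0 1) = 0 := by
  have h := integral_map (μ := Measure.pi fun _ : ι => gaussianReal 0 1)
    (φ := fun z => w ⬝ᵥ z) (f := fun x : ℝ => x)
    (by fun_prop) (by fun_prop)
  rw [← h, map_dotProduct_pi_gaussianReal, integral_id_gaussianReal]

lemma integral_dotProduct_sq_pi_gaussianReal {ι : Type*} [Fintype ι] (w : ι → ℝ) :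
    ∫ z, (w ⬝ᵥ z) ^ 2 ∂(Measure.pi fun _ : ι => gaussianReal 0 1) = w ⬝ᵥ w := by
  have h := integral_map (μ := Measure.pi fun _ : ι => gaussianReal 0 1)
    (φ := fun z => w ⬝ᵥ z) (f := fun x : ℝ => x ^ 2)
    (by fun_prop) (by fun_prop)
  have hvar := variance_fun_id_gaussianReal (μ := 0) (v := (w ⬝ᵥ w).toNNReal)
  rw [variance_of_integral_eq_zero (by fun_prop) integral_id_gaussianReal] at hvar
  rw [← h, map_dotProduct_pi_gaussianReal, hvar, Real.coe_toNNReal]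
  exact Finset.sum_nonneg fun i _ => mul_self_nonneg _

lemma integrable_dotProduct_self_pi_gaussianReal {ι : Type*} [Fintype ι] :
    Integrable (fun z => z ⬝ᵥ z) (Measure.pi fun _ : ι => gaussianReal 0 1) := by
  classical
  refine integrable_finsetSum _ fun i _ => ?_
  simpa [pow_two] using integrable_dotProduct_sq_pi_gaussianReal (Pi.single i (1 : ℝ))

lemma integral_dotProduct_self_pi_gaussianReal {ι : Type*} [Fintype ι] :
    ∫ z, z ⬝ᵥ z ∂(Measure.pi fun _ : ι => gaussianReal 0 1) = Fintype.card ι := by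
  classical
  have hint (i : ι) : Integrable (fun z : ι → ℝ => z i * z i)
      (Measure.pi fun _ : ι => gaussianReal 0 1) := by
    simpa [pow_two] using integrable_dotProduct_sq_pi_gaussianReal (Pi.single i (1 : ℝ))
  have hval (i : ι) : ∫ z, z i * z i ∂(Measure.pi fun _ : ι => gaussianReal 0 1) = 1 := by
    simpa [pow_two] using integral_dotProduct_sq_pi_gaussianReal (Pi.single i (1 : ℝ))
  simp only [dotProduct]
  rw [integral_finsetSum _ fun i _ => hint i]
  simp [hval]

lemma lintegral_exp_neg_mul_sq_gaussianReal (v : NNReal) {K : ℝ} (hK : 0 < 1 + 2 * K * v) :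
    ∫⁻ x, ENNReal.ofReal (Real.exp (-(K * x ^ 2))) ∂gaussianReal 0 v =
      ENNReal.ofReal (√(1 + 2 * K * v))⁻¹ := by
  rcases eq_or_ne v 0 with rfl | hv
  · simp [lintegral_dirac]
  have hv' : (0 : ℝ) < v := by positivity
  have hb : 0 < K + 1 / (2 * v) := by
    have : K + 1 / (2 * v) = (1 + 2 * K * v) / (2 * v) := by field_simp; ring
    rw [this]
    positivity
  rw [gaussianReal_of_var_ne_zero 0 hv,
    lintegral_withDensity_eq_lintegral_mul _ (measurable_gaussianPDF 0 v) (by fun_prop)]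
  have hpt (x : ℝ) :
      (gaussianPDF 0 v * fun x => ENNReal.ofReal (Real.exp (-(K * x ^ 2)))) x =
        ENNReal.ofReal ((√(2 * Real.pi * v))⁻¹ * Real.exp (-(K + 1 / (2 * v)) * x ^ 2)) := by
    rw [Pi.mul_apply, gaussianPDF_def, ← ENNReal.ofReal_mul (gaussianPDFReal_nonneg _ _ _),
      gaussianPDFReal_def, mul_assoc, ← Real.exp_add]
    congr 3
    field_simp
    ring
  simp_rw [hpt]
  rw [← ofReal_integral_eq_lintegral_ofReal ((integrable_exp_neg_mul_sq hb).const_mul _)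
    (.of_forall fun x => by positivity), integral_const_mul, integral_gaussian,
    ← Real.sqrt_inv, ← Real.sqrt_mul (by positivity), ← Real.sqrt_inv]
  congr 2
  have := hK.ne'
  have h2 : K + 1 / (2 * v) = (1 + 2 * K * v) / (2 * v) := by field_simp; ring
  rw [h2]
  field_simp

/-- Jensen's inequality for the exponential, with a lower Lebesgue integral on the right. -/
lemma ofReal_exp_integral_le_lintegral {α : Type*} [MeasurableSpace α] {μ : Measure α}
    [IsProbabilityMeasure μ] {f : α → ℝ} (hf : Integrable f μ) :
    ENNReal.ofReal (Real.exp (∫ x, f x ∂μ)) ≤ ∫⁻ x, ENNReal.ofReal (Real.exp (f x)) ∂μ := by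
  set M := ∫ x, f x ∂μ with hM
  set g : α → ℝ := fun x => Real.exp M * (1 + (f x - M)) with hg_def
  have hfM : Integrable (fun x => f x - M) μ := hf.sub (integrable_const _)
  have hg : Integrable g μ := ((integrable_const _).add hfM).const_mul _
  have hgM : ∫ x, g x ∂μ = Real.exp M := by
    rw [hg_def, integral_const_mul,
      integral_add (integrable_const _) hfM,
      integral_sub hf (integrable_const _)]
    simp [← hM]
  have hgf (x : α) : g x ≤ Real.exp (f x) := by
    have h : Real.exp (f x) = Real.exp M * Real.exp (f x - M) := by
      rw [← Real.exp_add]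
      ring_nf
    rw [h]
    refine mul_le_mul_of_nonneg_left ?_ (Real.exp_pos _).le
    linarith [Real.add_one_le_exp (f x - M)]
  calc ENNReal.ofReal (Real.exp M) ≤ ENNReal.ofReal (∫ x, max (g x) 0 ∂μ) := by
        rw [← hgM]
        exact ENNReal.ofReal_le_ofReal (integral_mono hg hg.pos_part fun x => le_max_left _ _)
    _ = ∫⁻ x, ENNReal.ofReal (max (g x) 0) ∂μ :=
        ofReal_integral_eq_lintegral_ofReal hg.pos_part (.of_forall fun x => le_max_right _ _)
    _ ≤ ∫⁻ x, ENNReal.ofReal (Real.exp (f x)) ∂μ :=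
        lintegral_mono fun x =>
          ENNReal.ofReal_le_ofReal (max_le (hgf x) (Real.exp_pos _).le)

lemma real_dotProduct_self_nonneg {ι : Type*} [Fintype ι] (x : ι → ℝ) : 0 ≤ x ⬝ᵥ x :=
  Finset.sum_nonneg fun _ _ => mul_self_nonneg _

lemma lintegral_exp_neg_mul_dotProduct_sq {ι : Type*} [Fintype ι] {K : ℝ} (hK : 0 ≤ K)
    (θ : ι → ℝ) :
    ∫⁻ a, ENNReal.ofReal (Real.exp (-(K * (a ⬝ᵥ θ) ^ 2)))
        ∂(Measure.pi fun _ : ι => gaussianReal 0 1) =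
      ENNReal.ofReal (√(1 + 2 * K * (θ ⬝ᵥ θ)))⁻¹ := by
  have hθ := real_dotProduct_self_nonneg θ
  have h := lintegral_map (μ := Measure.pi fun _ : ι => gaussianReal 0 1)
    (f := fun x : ℝ => ENNReal.ofReal (Real.exp (-(K * x ^ 2))))
    (g := fun a => θ ⬝ᵥ a) (by fun_prop) (by fun_prop)
  rw [map_dotProduct_pi_gaussianReal, lintegral_exp_neg_mul_sq_gaussianReal _ (by positivity),
    Real.coe_toNNReal _ hθ] at h
  simp_rw [dotProduct_comm _ θ]
  rw [← h, dotProduct_comm]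

/-- Exponential moment of a sum of soft indicators of small linear forms. -/
lemma lintegral_exp_sum_exp_neg_le {m n : ℕ} {K : ℝ} (hK : 0 ≤ K) (θ : Fin n → ℝ) :
    ∫⁻ a, ENNReal.ofReal (Real.exp (∑ j, Real.exp (-(K * (a j ⬝ᵥ θ) ^ 2))))
        ∂stdGaussianMat m n ≤
      ENNReal.ofReal (Real.exp (2 * m * (√(1 + 2 * K * (θ ⬝ᵥ θ)))⁻¹)) := by
  set ρ := (√(1 + 2 * K * (θ ⬝ᵥ θ)))⁻¹ with hρ
  have hρ0 : 0 ≤ ρ := by positivity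
  have hexp (x : ℝ) (h0 : 0 ≤ x) (h1 : x ≤ 1) : Real.exp x ≤ 1 + 2 * x := by
    have := (abs_le.1 (Real.abs_exp_sub_one_sub_id_le (abs_le.2 ⟨by linarith, h1⟩))).2
    nlinarith
  have hone : ∫⁻ a, ENNReal.ofReal (Real.exp (Real.exp (-(K * (a ⬝ᵥ θ) ^ 2))))
      ∂(Measure.pi fun _ : Fin n => gaussianReal 0 1) ≤ ENNReal.ofReal (Real.exp (2 * ρ)) := by
    calc _ ≤ ∫⁻ a, (1 + 2 * ENNReal.ofReal (Real.exp (-(K * (a ⬝ᵥ θ) ^ 2))))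
          ∂(Measure.pi fun _ : Fin n => gaussianReal 0 1) := by
          refine lintegral_mono fun a => ?_
          have h : Real.exp (-(K * (a ⬝ᵥ θ) ^ 2)) ≤ 1 :=
            Real.exp_le_one_iff.2 (neg_nonpos.2 (by positivity))
          refine (ENNReal.ofReal_le_ofReal (hexp _ (Real.exp_pos _).le h)).trans_eq ?_
          rw [ENNReal.ofReal_add zero_le_one (by positivity), ENNReal.ofReal_mul zero_le_two]
          simp
      _ = ENNReal.ofReal (1 + 2 * ρ) := by
          rw [lintegral_add_left measurable_const, lintegral_const_mul _ (by fun_prop),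
            lintegral_exp_neg_mul_dotProduct_sq hK,
            ENNReal.ofReal_add zero_le_one (by positivity), ENNReal.ofReal_mul zero_le_two]
          simp [hρ]
      _ ≤ _ := by
          have := Real.add_one_le_exp (2 * ρ)
          exact ENNReal.ofReal_le_ofReal (by linarith)
  simp_rw [Real.exp_sum]
  simp_rw [ENNReal.ofReal_prod_of_nonneg fun i _ => (Real.exp_pos _).le]
  rw [stdGaussianMat, lintegral_pi_prod
    (fun _ : Fin m => Measure.pi fun _ : Fin n => gaussianReal 0 1)
    (f := fun _ a => ENNReal.ofReal (Real.exp (Real.exp (-(K * (a ⬝ᵥ θ) ^ 2))))) (by fun_prop)]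
  calc _ ≤ ∏ _j : Fin m, ENNReal.ofReal (Real.exp (2 * ρ)) :=
        Finset.prod_le_prod' fun _ _ => hone
    _ = _ := by
        rw [Finset.prod_const, Finset.card_univ, Fintype.card_fin,
          ← ENNReal.ofReal_pow (Real.exp_pos _).le, ← Real.exp_nat_mul]
        ring_nf

/-- Tail bound for the squared Frobenius norm of a standard Gaussian matrix. -/
lemma stdGaussianMat_sum_dotProduct_self_ge_le (m n : ℕ) :
    stdGaussianMat m n {a | 3 * m * n ≤ ∑ j, a j ⬝ᵥ a j} ≤
      ENNReal.ofReal (Real.exp (-(m * n / 4))) := by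
  have hent : ∫⁻ x, ENNReal.ofReal (Real.exp (x ^ 2 / 4)) ∂gaussianReal 0 1 ≤
      ENNReal.ofReal (Real.exp (1 / 2)) := by
    have h := lintegral_exp_neg_mul_sq_gaussianReal 1 (K := -1 / 4) (by norm_num)
    have hx (x : ℝ) : -(-1 / 4 * x ^ 2) = x ^ 2 / 4 := by ring
    simp_rw [hx] at h
    rw [h]
    refine ENNReal.ofReal_le_ofReal ?_
    have h1 := Real.add_one_le_exp (1 / 2)
    refine le_trans ?_ h1
    rw [← Real.sqrt_inv, Real.sqrt_le_left (by norm_num)]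
    norm_num
  have hmom : ∫⁻ a, ENNReal.ofReal (Real.exp (∑ j, (a j ⬝ᵥ a j) / 4)) ∂stdGaussianMat m n ≤
      ENNReal.ofReal (Real.exp (m * n / 2)) := by
    simp_rw [dotProduct, Finset.sum_div, Real.exp_sum, ← pow_two]
    simp_rw [ENNReal.ofReal_prod_of_nonneg
      fun i _ => Finset.prod_nonneg fun _ _ => (Real.exp_pos _).le]
    simp_rw [ENNReal.ofReal_prod_of_nonneg fun i _ => (Real.exp_pos _).le]
    rw [stdGaussianMat, lintegral_pi_prod
    (fun _ : Fin m => Measure.pi fun _ : Fin n => gaussianReal 0 1)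
      (f := fun _ a => ∏ i, ENNReal.ofReal (Real.exp (a i ^ 2 / 4))) (by fun_prop)]
    rw [lintegral_pi_prod (fun _ : Fin n => gaussianReal 0 1)
      (f := fun _ x => ENNReal.ofReal (Real.exp (x ^ 2 / 4))) (by fun_prop)]
    calc _ ≤ ∏ _j : Fin m, ∏ _i : Fin n, ENNReal.ofReal (Real.exp (1 / 2)) :=
          Finset.prod_le_prod' fun _ _ => Finset.prod_le_prod' fun _ _ => hent
      _ = _ := by
          simp only [Finset.prod_const, Finset.card_univ, Fintype.card_fin]
          rw [← pow_mul, ← ENNReal.ofReal_pow (Real.exp_pos _).le, ← Real.exp_nat_mul]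
          push_cast
          ring_nf
  have hmarkov := mul_meas_ge_le_lintegral (μ := stdGaussianMat m n)
    (f := fun a => ENNReal.ofReal (Real.exp (∑ j, (a j ⬝ᵥ a j) / 4))) (by fun_prop)
    (ENNReal.ofReal (Real.exp (3 * m * n / 4)))
  have hset : {a : Fin m → Fin n → ℝ | 3 * m * n ≤ ∑ j, a j ⬝ᵥ a j} ⊆
      {a | ENNReal.ofReal (Real.exp (3 * m * n / 4)) ≤
        ENNReal.ofReal (Real.exp (∑ j, (a j ⬝ᵥ a j) / 4))} := by
    intro a ha
    simp only [Set.mem_ofPred_eq] at ha ⊢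
    rw [← Finset.sum_div]
    gcongr
  have hpos : ENNReal.ofReal (Real.exp (3 * m * n / 4)) ≠ 0 := by
    simpa using Real.exp_pos _
  calc _ ≤ _ := measure_mono hset
    _ ≤ ENNReal.ofReal (Real.exp (m * n / 2)) / ENNReal.ofReal (Real.exp (3 * m * n / 4)) := by
        rw [ENNReal.le_div_iff_mul_le (.inl hpos) (.inl ENNReal.ofReal_ne_top), mul_comm]
        exact hmarkov.trans hmom
    _ = _ := by
        rw [← ENNReal.ofReal_div_of_pos (Real.exp_pos _), ← Real.exp_sub]
        ring_nf

lemma exp_neg_mul_add_sq_ge {K : ℝ} (hK : 0 ≤ K) (x t : ℝ) :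
    Real.exp (-(K * x ^ 2)) - 2 * K * x * Real.exp (-(K * x ^ 2)) * t - K * t ^ 2 ≤
      Real.exp (-(K * (x + t) ^ 2)) := by
  have h : Real.exp (-(K * (x + t) ^ 2)) =
      Real.exp (-(K * x ^ 2)) * Real.exp (-(2 * K * x * t + K * t ^ 2)) := by
    rw [← Real.exp_add]
    ring_nf
  have h1 : Real.exp (-(K * x ^ 2)) ≤ 1 := Real.exp_le_one_iff.2 (neg_nonpos.2 (by positivity))
  have h2 := mul_le_mul_of_nonneg_left (Real.add_one_le_exp (-(2 * K * x * t + K * t ^ 2)))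
    (Real.exp_pos (-(K * x ^ 2))).le
  have h3 : 0 ≤ K * t ^ 2 := by positivity
  rw [h]
  nlinarith

lemma inv_sqrt_add_le {ι : Type*} [Fintype ι] {K : ℝ} (hK : 0 ≤ K) {u : ι → ℝ} (hu : u ⬝ᵥ u = 1)
    (t : ι → ℝ) :
    (√(1 + 2 * K * ((u + t) ⬝ᵥ (u + t))))⁻¹ ≤ (√(1 + K / 2))⁻¹ + 4 * (t ⬝ᵥ t) := by
  have ht := real_dotProduct_self_nonneg t
  have hut := real_dotProduct_self_nonneg (u + t)
  rcases le_total (1 / 4) (t ⬝ᵥ t) with h | h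
  · have h1 : (√(1 + 2 * K * ((u + t) ⬝ᵥ (u + t))))⁻¹ ≤ 1 := by
      refine inv_le_one_of_one_le₀ (Real.one_le_sqrt.2 ?_)
      have : 0 ≤ 2 * K * ((u + t) ⬝ᵥ (u + t)) := by positivity
      linarith
    have h2 : 0 ≤ (√(1 + K / 2))⁻¹ := by positivity
    linarith
  · have h1 := real_dotProduct_self_nonneg (u + t + t)
    have h2 : (u + t + t) ⬝ᵥ (u + t + t) + u ⬝ᵥ u =
        2 * ((u + t) ⬝ᵥ (u + t)) + 2 * (t ⬝ᵥ t) := by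
      simp only [dotProduct_add, add_dotProduct]
      ring
    have h3 : 1 / 4 ≤ (u + t) ⬝ᵥ (u + t) := by linarith
    have h4 : (√(1 + 2 * K * ((u + t) ⬝ᵥ (u + t))))⁻¹ ≤ (√(1 + K / 2))⁻¹ := by
      have : K / 2 ≤ 2 * K * ((u + t) ⬝ᵥ (u + t)) := by nlinarith
      gcongr
    linarith

/-- Lower bound on the Gaussian average of an exponential functional in terms of its value at
an arbitrary unit vector `u`. -/
lemma ofReal_exp_le_lintegral_exp_sum {m n : ℕ} {K δ : ℝ} (hK : 0 ≤ K) (hδ : 0 < δ)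
    (a : Fin m → Fin n → ℝ) {u : Fin n → ℝ} (hu : u ⬝ᵥ u = 1) :
    ENNReal.ofReal (Real.exp (∑ j, Real.exp (-(K * (a j ⬝ᵥ u) ^ 2))
        - 2 * m * (√(1 + K / 2))⁻¹ - 1 / (2 * δ ^ 2) - K * δ ^ 2 * ∑ j, a j ⬝ᵥ a j
        - 8 * m * δ ^ 2 * n)) ≤
      ∫⁻ z, ENNReal.ofReal (Real.exp (∑ j, Real.exp (-(K * (a j ⬝ᵥ (δ • z)) ^ 2))
        - 2 * m * (√(1 + 2 * K * ((δ • z) ⬝ᵥ (δ • z))))⁻¹))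
        ∂(Measure.pi fun _ : Fin n => gaussianReal 0 1) := by
  set γ : Measure (Fin n → ℝ) := Measure.pi fun _ => gaussianReal 0 1
  set w : Fin n → ℝ := δ⁻¹ • u
  have hww : w ⬝ᵥ w = 1 / δ ^ 2 := by
    simp only [w, dotProduct_smul, smul_dotProduct, hu, smul_eq_mul]
    field_simp
  have hshift (z : Fin n → ℝ) : δ • (z + w) = u + δ • z := by
    simp only [w, smul_add, smul_smul, mul_inv_cancel₀ hδ.ne', one_smul, add_comm]
  set x : Fin m → ℝ := fun j => a j ⬝ᵥ u
  set ψ : Fin m → ℝ := fun j => Real.exp (-(K * x j ^ 2)) with hψ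
  set s : Fin m → (Fin n → ℝ) → ℝ := fun j z =>
    ψ j - 2 * K * x j * ψ j * δ * (a j ⬝ᵥ z) - K * δ ^ 2 * (a j ⬝ᵥ z) ^ 2 with hs_def
  set L : (Fin n → ℝ) → ℝ := fun z =>
    ∑ j, s j z - (2 * m * (√(1 + K / 2))⁻¹ + 8 * m * δ ^ 2 * (z ⬝ᵥ z)) - (w ⬝ᵥ z + w ⬝ᵥ w / 2)
    with hL_def
  have hlin (b : Fin n → ℝ) : Integrable (fun z => b ⬝ᵥ z) γ :=
    integrable_dotProduct_pi_gaussianReal b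
  have hsq (b : Fin n → ℝ) : Integrable (fun z => (b ⬝ᵥ z) ^ 2) γ :=
    integrable_dotProduct_sq_pi_gaussianReal b
  have hself : Integrable (fun z => z ⬝ᵥ z) γ := integrable_dotProduct_self_pi_gaussianReal
  have hs1 (j : Fin m) : Integrable
      (fun z => ψ j - 2 * K * x j * ψ j * δ * (a j ⬝ᵥ z)) γ :=
    (integrable_const _).sub ((hlin _).const_mul _)
  have hs2 (j : Fin m) : Integrable (fun z => K * δ ^ 2 * (a j ⬝ᵥ z) ^ 2) γ :=
    (hsq _).const_mul _
  have hs (j : Fin m) : Integrable (s j) γ := (hs1 j).sub (hs2 j)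
  have hsint (j : Fin m) : ∫ z, s j z ∂γ = ψ j - K * δ ^ 2 * (a j ⬝ᵥ a j) := by
    rw [hs_def, integral_sub (hs1 j) (hs2 j),
      integral_sub (integrable_const _) ((hlin _).const_mul _), integral_const_mul,
      integral_const_mul, integral_dotProduct_pi_gaussianReal,
      integral_dotProduct_sq_pi_gaussianReal]
    simp
  have hsum : Integrable (fun z => ∑ j, s j z) γ := integrable_finsetSum _ fun j _ => hs j
  have hρ : Integrable
      (fun z => 2 * m * (√(1 + K / 2))⁻¹ + 8 * m * δ ^ 2 * (z ⬝ᵥ z)) γ :=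
    (integrable_const _).add (hself.const_mul _)
  have hw : Integrable (fun z => w ⬝ᵥ z + w ⬝ᵥ w / 2) γ := (hlin w).add (integrable_const _)
  have hsumρ : Integrable (fun z =>
      ∑ j, s j z - (2 * m * (√(1 + K / 2))⁻¹ + 8 * m * δ ^ 2 * (z ⬝ᵥ z))) γ := hsum.sub hρ
  have hL : Integrable L γ := hsumρ.sub hw
  have hLint : ∫ z, L z ∂γ = ∑ j, ψ j - 2 * m * (√(1 + K / 2))⁻¹ - 1 / (2 * δ ^ 2)
      - K * δ ^ 2 * ∑ j, a j ⬝ᵥ a j - 8 * m * δ ^ 2 * n := by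
    rw [hL_def, integral_sub hsumρ hw, integral_sub hsum hρ, integral_finsetSum _ fun j _ => hs j,
      integral_add (integrable_const _) (hself.const_mul _),
      integral_add (hlin w) (integrable_const _), integral_const_mul, integral_const_mul,
      integral_dotProduct_self_pi_gaussianReal, integral_dotProduct_pi_gaussianReal]
    simp only [hsint, Finset.sum_sub_distrib, ← Finset.mul_sum, hww, integral_const,
      probReal_univ, one_smul, Fintype.card_fin]
    field_simp
    ring
  rw [← hLint]
  refine (ofReal_exp_integral_le_lintegral hL).trans ?_
  refine le_of_le_of_eq (lintegral_mono fun z => ?_)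
    (lintegral_pi_gaussianReal_add_mul_exp w (by fun_prop))
  rw [← ENNReal.ofReal_mul (Real.exp_pos _).le, ← Real.exp_add, hshift]
  refine ENNReal.ofReal_le_ofReal (Real.exp_le_exp.2 ?_)
  have h1 : ∑ j, s j z ≤ ∑ j, Real.exp (-(K * (a j ⬝ᵥ (u + δ • z)) ^ 2)) := by
    refine Finset.sum_le_sum fun j _ => ?_
    rw [dotProduct_add, dotProduct_smul, smul_eq_mul]
    refine le_trans (le_of_eq ?_) (exp_neg_mul_add_sq_ge hK _ _)
    simp only [hs_def, hψ, x]
    ring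
  have h2 := mul_le_mul_of_nonneg_left (inv_sqrt_add_le hK hu (δ • z))
    (show (0 : ℝ) ≤ 2 * m by positivity)
  have h3 : (δ • z) ⬝ᵥ (δ • z) = δ ^ 2 * (z ⬝ᵥ z) := by
    simp only [dotProduct_smul, smul_dotProduct, smul_eq_mul]
    ring
  rw [h3] at h2
  simp only [hL_def]
  nlinarith

/-- With high probability, the Gaussian average of the normalized exponential functional is
subexponential. -/
lemma stdGaussianMat_exp_le_lintegral_le {m n : ℕ} {K : ℝ} (hK : 0 ≤ K) (δ r : ℝ) :
    stdGaussianMat m n {a | ENNReal.ofReal (Real.exp r) ≤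
      ∫⁻ z, ENNReal.ofReal (Real.exp (∑ j, Real.exp (-(K * (a j ⬝ᵥ (δ • z)) ^ 2))
        - 2 * m * (√(1 + 2 * K * ((δ • z) ⬝ᵥ (δ • z))))⁻¹))
        ∂(Measure.pi fun _ : Fin n => gaussianReal 0 1)} ≤ ENNReal.ofReal (Real.exp (-r)) := by
  have : IsProbabilityMeasure (stdGaussianMat m n) := by
    unfold stdGaussianMat
    infer_instance
  set γ : Measure (Fin n → ℝ) := Measure.pi fun _ => gaussianReal 0 1
  set F : (Fin m → Fin n → ℝ) → (Fin n → ℝ) → ENNReal := fun a z =>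
    ENNReal.ofReal (Real.exp (∑ j, Real.exp (-(K * (a j ⬝ᵥ (δ • z)) ^ 2))
        - 2 * m * (√(1 + 2 * K * ((δ • z) ⬝ᵥ (δ • z))))⁻¹)) with hF_def
  have hF : Measurable (Function.uncurry F) := by
    simp only [hF_def, Function.uncurry_def]
    fun_prop
  have hmean : ∫⁻ a, ∫⁻ z, F a z ∂γ ∂stdGaussianMat m n ≤ 1 := by
    rw [lintegral_lintegral_swap hF.aemeasurable]
    calc _ ≤ ∫⁻ _z, 1 ∂γ := by
          refine lintegral_mono fun z => ?_
          simp only [hF_def, sub_eq_add_neg, Real.exp_add, ENNReal.ofReal_mul (Real.exp_pos _).le]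
          rw [lintegral_mul_const _ (by fun_prop)]
          refine (mul_le_mul_left (lintegral_exp_sum_exp_neg_le hK (δ • z)) _).trans_eq ?_
          rw [← ENNReal.ofReal_mul (Real.exp_pos _).le, ← Real.exp_add, add_neg_cancel,
            Real.exp_zero, ENNReal.ofReal_one]
      _ = 1 := by simp
  have hmarkov := mul_meas_ge_le_lintegral (μ := stdGaussianMat m n) (hF.lintegral_prod_right (ν := γ))
    (ENNReal.ofReal (Real.exp r))
  have hpos : ENNReal.ofReal (Real.exp r) ≠ 0 := by simpa using Real.exp_pos _
  calc _ ≤ 1 / ENNReal.ofReal (Real.exp r) := by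
        rw [ENNReal.le_div_iff_mul_le (.inl hpos) (.inl ENNReal.ofReal_ne_top), mul_comm]
        exact hmarkov.trans hmean
    _ = _ := by
        rw [one_div, ← ENNReal.ofReal_inv_of_pos (Real.exp_pos _), Real.exp_neg]

/-- If the soft counts of small linear forms are at most `m / 4` at `u` and at `v`, then the
mixed fourth moment at `u, v` is bounded below. -/
lemma sum_sq_mul_sq_ge {ι : Type*} [Fintype ι] {K M : ℝ} (hK : 0 < K) {x y : ι → ℝ}
    (hM : M = Fintype.card ι)
    (hx : ∑ j, Real.exp (-(K * x j ^ 2)) ≤ M / 4) (hy : ∑ j, Real.exp (-(K * y j ^ 2)) ≤ M / 4) :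
    M / (2 * K ^ 2) ≤ ∑ j, x j ^ 2 * y j ^ 2 := by
  have hpt (j : ι) : 1 - Real.exp (-(K * x j ^ 2)) - Real.exp (-(K * y j ^ 2)) ≤
      K ^ 2 * (x j ^ 2 * y j ^ 2) := by
    have hx1 := Real.add_one_le_exp (-(K * x j ^ 2))
    have hy1 := Real.add_one_le_exp (-(K * y j ^ 2))
    have hy2 : Real.exp (-(K * y j ^ 2)) ≤ 1 :=
      Real.exp_le_one_iff.2 (neg_nonpos.2 (by positivity))
    have hprod := mul_le_mul (show 1 - Real.exp (-(K * x j ^ 2)) ≤ K * x j ^ 2 by linarith)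
      (show 1 - Real.exp (-(K * y j ^ 2)) ≤ K * y j ^ 2 by linarith) (by linarith)
      (by positivity)
    have := mul_pos (Real.exp_pos (-(K * x j ^ 2))) (Real.exp_pos (-(K * y j ^ 2)))
    nlinarith
  have hsum := Finset.sum_le_sum fun j (_ : j ∈ Finset.univ) => hpt j
  rw [Finset.sum_sub_distrib, Finset.sum_sub_distrib, ← Finset.mul_sum] at hsum
  simp only [Finset.sum_const, Finset.card_univ, nsmul_eq_mul, mul_one, ← hM] at hsum
  rw [div_le_iff₀ (by positivity)]
  linarith

/-- If `m ≥ C n` then with probability at least `1 − exp(−c m)`,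
`(1/m)∑ⱼ(aⱼᵀu)²(aⱼᵀv)² ≥ c₁ > 0` for all unit vectors `u, v`. -/
theorem mixed_fourth_moment_lower_bound :
    ∃ C > (0 : ℝ), ∃ c > (0 : ℝ), ∃ c₁ > (0 : ℝ), ∀ n m : ℕ,
      (m : ℝ) ≥ C * n →
      stdGaussianMat m n {a | ∀ u v : Fin n → ℝ,
          ∑ i, (u i) ^ 2 = 1 → ∑ i, (v i) ^ 2 = 1 →
          (1 / (m : ℝ)) * ∑ j, (∑ i, a j i * u i) ^ 2 * (∑ i, a j i * v i) ^ 2 ≥ c₁}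
        ≥ ENNReal.ofReal (1 - Real.exp (-(c * m))) := by
  refine ⟨819200, by norm_num, 1 / 32, by norm_num, 1 / (2 * 2046 ^ 2), by norm_num,
    fun n m hm => ?_⟩
  have : IsProbabilityMeasure (stdGaussianMat m n) := by
    unfold stdGaussianMat
    infer_instance
  rcases Nat.eq_zero_or_pos n with rfl | hn
  · simp only [Finset.univ_eq_empty, Finset.sum_empty, zero_ne_one, false_imp_iff, implies_true,
      Set.ofPred_true, measure_univ, ge_iff_le, ENNReal.ofReal_le_one, sub_le_self_iff]
    exact (Real.exp_pos _).le
  have hn1 : (1 : ℝ) ≤ n := by exact_mod_cast hn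
  have hm0 : (819200 : ℝ) ≤ m := by linarith
  set δ : ℝ := 1 / (320 * √n) with hδ_def
  have hδ : 0 < δ := by positivity
  have hδn : δ ^ 2 * n = 1 / 102400 := by
    rw [hδ_def, div_pow, mul_pow, Real.sq_sqrt (by positivity)]
    field_simp
    norm_num
  set S := {a : Fin m → Fin n → ℝ | ∀ u v : Fin n → ℝ,
    ∑ i, (u i) ^ 2 = 1 → ∑ i, (v i) ^ 2 = 1 →
    (1 / (m : ℝ)) * ∑ j, (∑ i, a j i * u i) ^ 2 * (∑ i, a j i * v i) ^ 2 ≥ 1 / (2 * 2046 ^ 2)}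
  set B₁ := {a : Fin m → Fin n → ℝ | 3 * m * n ≤ ∑ j, a j ⬝ᵥ a j}
  set B₂ := {a : Fin m → Fin n → ℝ | ENNReal.ofReal (Real.exp (m / 16)) ≤
    ∫⁻ z, ENNReal.ofReal (Real.exp (∑ j, Real.exp (-(2046 * (a j ⬝ᵥ (δ • z)) ^ 2))
      - 2 * m * (√(1 + 2 * 2046 * ((δ • z) ⬝ᵥ (δ • z))))⁻¹))
      ∂(Measure.pi fun _ : Fin n => gaussianReal 0 1)}
  have hcover : Set.univ ⊆ S ∪ (B₁ ∪ B₂) := by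
    intro a _
    by_contra ha
    simp only [Set.mem_union, not_or] at ha
    obtain ⟨haS, haB₁, haB₂⟩ := ha
    have hfrob : ∑ j, a j ⬝ᵥ a j < 3 * m * n := not_le.1 haB₁
    have hcount (u : Fin n → ℝ) (hu : u ⬝ᵥ u = 1) :
        ∑ j, Real.exp (-(2046 * (a j ⬝ᵥ u) ^ 2)) ≤ m / 4 := by
      have h := (ofReal_exp_le_lintegral_exp_sum (K := 2046) (by norm_num) hδ a hu).trans_lt
        (not_le.1 haB₂)
      have h' := Real.exp_lt_exp.1 ((ENNReal.ofReal_lt_ofReal_iff (Real.exp_pos _)).1 h)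
      have hη : (√(1 + 2046 / 2 : ℝ))⁻¹ = 1 / 32 := by
        rw [show (1 + 2046 / 2 : ℝ) = 32 ^ 2 by norm_num, Real.sqrt_sq (by norm_num)]
        norm_num
      have hF : 2046 * δ ^ 2 * ∑ j, a j ⬝ᵥ a j ≤ 2046 * 3 * m * (δ ^ 2 * n) := by
        have := mul_le_mul_of_nonneg_left hfrob.le (show 0 ≤ 2046 * δ ^ 2 by positivity)
        linarith
      have hδ2 : 1 / (2 * δ ^ 2) = 51200 * n := by
        rw [div_eq_iff (by positivity)]
        linarith
      have h8 : 8 * m * δ ^ 2 * n = 8 * m * (δ ^ 2 * n) := by ring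
      rw [hη, hδ2, h8] at h'
      rw [hδn] at hF h'
      linarith
    refine haS fun u v hu hv => ?_
    have h := sum_sq_mul_sq_ge (K := 2046) (M := m) (by norm_num) (by simp)
      (hcount u (by simpa [dotProduct, pow_two] using hu))
      (hcount v (by simpa [dotProduct, pow_two] using hv))
    rw [one_div_mul_eq_div, ge_iff_le, le_div_iff₀ (by linarith)]
    refine le_trans (le_of_eq ?_) h
    ring
  have hB : stdGaussianMat m n (B₁ ∪ B₂) ≤ ENNReal.ofReal (Real.exp (-(1 / 32 * m))) := by
    refine (measure_union_le _ _).trans ?_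
    refine (add_le_add (stdGaussianMat_sum_dotProduct_self_ge_le m n)
      (stdGaussianMat_exp_le_lintegral_le (by norm_num) δ (m / 16))).trans ?_
    rw [← ENNReal.ofReal_add (Real.exp_pos _).le (Real.exp_pos _).le]
    refine ENNReal.ofReal_le_ofReal ?_
    have h1 : Real.exp (-(m * n / 4 : ℝ)) ≤ Real.exp (-(m / 16)) :=
      Real.exp_le_exp.2 (by nlinarith)
    have h2 : Real.exp (-(1 / 32 * m : ℝ)) = Real.exp (m / 32) * Real.exp (-(m / 16)) := by
      rw [← Real.exp_add]
      ring_nf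
    have h3 := Real.add_one_le_exp (m / 32 : ℝ)
    have h4 := Real.exp_pos (-(m / 16 : ℝ))
    rw [h2]
    nlinarith
  have htotal : 1 ≤ stdGaussianMat m n S + ENNReal.ofReal (Real.exp (-(1 / 32 * m))) := by
    rw [← measure_univ (μ := stdGaussianMat m n)]
    exact (measure_mono hcover).trans ((measure_union_le _ _).trans (by gcongr))
  rw [ge_iff_le, ENNReal.ofReal_sub _ (Real.exp_pos _).le, ENNReal.ofReal_one]
  exact tsub_le_iff_right.2 htotal
end
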